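/- Let A be an m×n matrix of nonnegative real numbers each of whose row sums ∑_{j} A_{ij} is an integer. Then there exists a finitely supported random integer matrix Z (a probability distribution over integer m×n matrices) such that: almost surely Z_{ij} ∈ {⌊A_{ij}⌋, ⌈A_{ij}⌉} for all i,j; almost surely ∑_j Z_{ij} = ∑_j A_{ij} for every row i; almost surely ∑_i Z_{ij} ∈ {⌊∑_i A_{ij}⌋, ⌈∑_i A_{ij}⌉} for every column j; and E[Z_{ij}] = A_{ij} for all i,j (unbiased controlled rounding). -/

import Mathlib

open Finset

/-!
Border `A` with an extra column of negated row sums, an extra row of negated column sums and the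
total in the corner. All row and column sums of the bordered matrix vanish, so it lies in a
transportation polytope with integral data, whose bounds are the floors and ceilings of the entries.

A vertex of such a polytope is integral: a row or column with one nonintegral entry has at least two
of them, so there are at least as many nonintegral entries as rows and columns that contain them.
One of the marginal equations of these rows and columns is redundant, so if there are nonintegral
entries, some nonzero matrix supported on them has vanishing marginals, and one can move both ways
along it, which is impossible at a vertex. Hence there are finitely many vertices, and by
Krein–Milman the bordered matrix is a convex combination of them;
their restrictions are the roundings.
-/

open Topology

section Marginals

variable {ι κ : Type*} [Fintype ι] [Fintype κ]

/-- The linear map sending a matrix to its row sums and its column sums. -/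
def marginals {R : Type*} [Semiring R] : (ι → κ → R) →ₗ[R] (ι → R) × (κ → R) where
  toFun D := (fun i => ∑ j, D i j, fun j => ∑ i, D i j)
  map_add' D E := by ext <;> simp [sum_add_distrib]
  map_smul' c D := by ext <;> simp [mul_sum]

lemma marginals_eq_iff {R : Type*} [Semiring R] {D : ι → κ → R} {r : ι → R} {c : κ → R} :
    marginals D = (r, c) ↔ (∀ i, ∑ j, D i j = r i) ∧ ∀ j, ∑ i, D i j = c j := by
  simp [marginals, funext_iff]

lemma marginals_eq_zero_of_forall_ne {R : Type*} [Semiring R] {D : ι → κ → R} {i₀ : ι}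
    (hrow : ∀ i ≠ i₀, ∑ j, D i j = 0) (hcol : ∀ j, ∑ i, D i j = 0) : marginals D = 0 := by
  have hrow₀ : ∑ j, D i₀ j = 0 := calc
    ∑ j, D i₀ j = ∑ i, ∑ j, D i j := (Fintype.sum_eq_single i₀ hrow).symm
    _ = ∑ j, ∑ i, D i j := sum_comm
    _ = 0 := sum_eq_zero fun j _ => hcol j
  refine marginals_eq_iff.2 ⟨fun i => ?_, hcol⟩
  obtain rfl | hi := eq_or_ne i i₀
  exacts [hrow₀, hrow i hi]

lemma two_mul_card_image_le {α β : Type*} [DecidableEq β] {s : Finset α} {f : α → β}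
    (h : ∀ a ∈ s, ∃ b ∈ s, f b = f a ∧ b ≠ a) : 2 * #(s.image f) ≤ #s := by
  refine mul_card_image_le_card s 2 (forall_mem_image.2 fun a ha => ?_)
  obtain ⟨b, hb, hba, hne⟩ := h a ha
  exact one_lt_card.2 ⟨b, by simp [hb, hba], a, by simp [ha], hne⟩

theorem exists_ne_zero_marginals_eq_zero {K : Type*} [DivisionRing K] {S : Finset (ι × κ)}
    (hS : S.Nonempty) (hrow : ∀ p ∈ S, ∃ q ∈ S, q.1 = p.1 ∧ q ≠ p)
    (hcol : ∀ p ∈ S, ∃ q ∈ S, q.2 = p.2 ∧ q ≠ p) :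
    ∃ D : ι → κ → K, D ≠ 0 ∧ (∀ i j, (i, j) ∉ S → D i j = 0) ∧ marginals D = 0 := by
  classical
  obtain ⟨⟨i₀, j₀⟩, hp₀⟩ := hS
  set rows := S.image Prod.fst
  set cols := S.image Prod.snd
  -- The equation of row `i₀` is left out: it follows from the others.
  let Φ : (ι → κ → K) →ₗ[K] (↥Sᶜ → K) × (↥(rows.erase i₀) → K) × (↥cols → K) :=
    (LinearMap.pi fun p => LinearMap.proj p.1.2 ∘ₗ LinearMap.proj p.1.1).prod
      ((LinearMap.funLeft K K (↑)).prodMap (LinearMap.funLeft K K (↑)) ∘ₗ marginals)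
  have hdim : Module.finrank K ((↥Sᶜ → K) × (↥(rows.erase i₀) → K) × (↥cols → K)) <
      Module.finrank K (ι → κ → K) := by
    have hrows : 2 * #rows ≤ #S := two_mul_card_image_le hrow
    have hcols : 2 * #cols ≤ #S := two_mul_card_image_le hcol
    have herase : #(rows.erase i₀) + 1 = #rows := card_erase_add_one (mem_image_of_mem _ hp₀)
    have hcompl : #S + #Sᶜ = Fintype.card ι * Fintype.card κ := by
      rw [card_add_card_compl, Fintype.card_prod]
    simp only [Module.finrank_prod, Module.finrank_fintype_fun_eq_card, Fintype.card_coe,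
      Module.finrank_pi_fintype, sum_const, card_univ, smul_eq_mul]
    omega
  obtain ⟨D, hD, hD₀⟩ :=
    (LinearMap.ker Φ).exists_mem_ne_zero_of_ne_bot (LinearMap.ker_ne_bot_of_finrank_lt hdim)
  obtain ⟨hsupp', hrow', hcol'⟩ :
      (∀ p : ↥Sᶜ, D p.1.1 p.1.2 = 0) ∧ (∀ i : ↥(rows.erase i₀), ∑ j, D i j = 0) ∧
        ∀ j : ↥cols, ∑ i, D i j = 0 := by
    simp only [LinearMap.mem_ker, Prod.ext_iff, funext_iff] at hD
    exact hD
  have hsupp : ∀ i j, (i, j) ∉ S → D i j = 0 := fun i j h => hsupp' ⟨(i, j), mem_compl.2 h⟩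
  refine ⟨D, hD₀, hsupp, marginals_eq_zero_of_forall_ne (i₀ := i₀) (fun i hi => ?_) fun j => ?_⟩
  · by_cases h : i ∈ rows
    · exact hrow' ⟨i, mem_erase.2 ⟨hi, h⟩⟩
    · exact sum_eq_zero fun j _ => hsupp i j fun hij => h (mem_image_of_mem Prod.fst hij)
  · by_cases h : j ∈ cols
    · exact hcol' ⟨j, h⟩
    · exact sum_eq_zero fun i _ => hsupp i j fun hij => h (mem_image_of_mem Prod.snd hij)

end Marginals

section IntegralVertices

variable {ι κ : Type*} [Fintype ι] [Fintype κ]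

/-- The integers as an additive subgroup of the reals. -/
abbrev realIntegers : AddSubgroup ℝ := (Int.castAddHom ℝ).range

lemma exists_ne_notMem_of_sum_mem {M : Type*} [AddCommGroup M] {H : AddSubgroup M} {x : ι → M}
    (hx : ∑ i, x i ∈ H) {i : ι} (hi : x i ∉ H) : ∃ k ≠ i, x k ∉ H := by
  classical
  by_contra! h
  rw [← add_sum_erase univ x (mem_univ i)] at hx
  exact hi ((H.add_mem_cancel_right (sum_mem fun k hk => h k (ne_of_mem_erase hk))).1 hx)

lemma eventually_add_mul_mem_Icc {a b : ℤ} {x d : ℝ} (hx : x ∈ Set.Icc (a : ℝ) b)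
    (hd : x ∈ realIntegers → d = 0) : ∀ᶠ t in 𝓝 (0 : ℝ), x + t * d ∈ Set.Icc (a : ℝ) b := by
  by_cases hint : x ∈ realIntegers
  · simpa [hd hint] using hx
  have hax : (a : ℝ) < x := hx.1.lt_of_ne fun h => hint ⟨a, h⟩
  have hxb : x < b := hx.2.lt_of_ne fun h => hint ⟨b, h.symm⟩
  have hcont : ContinuousAt (fun t => x + t * d) 0 := by fun_prop
  exact hcont.eventually_mem (by simpa using Icc_mem_nhds hax hxb)

lemma eq_zero_of_mem_extremePoints_of_add_mem_of_sub_mem {𝕜 E : Type*} [Field 𝕜] [LinearOrder 𝕜]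
    [IsStrictOrderedRing 𝕜] [AddCommGroup E] [Module 𝕜 E] {P : Set E} {x v : E}
    (hx : x ∈ P.extremePoints 𝕜) (hadd : x + v ∈ P) (hsub : x - v ∈ P) : v = 0 :=
  add_eq_left.1 <| hx.2 hadd hsub ⟨1 / 2, 1 / 2, by norm_num, by norm_num, by norm_num, by module⟩

/-- The matrices with row sums `r` and column sums `c` whose entries lie between those of `l` and
those of `u`, for integral `l`, `u`, `r` and `c`. -/
def transportationPolytope (l u : ι → κ → ℤ) (r : ι → ℤ) (c : κ → ℤ) : Set (ι → κ → ℝ) :=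
  Set.Icc (fun i j => (l i j : ℝ)) (fun i j => (u i j : ℝ)) ∩
    marginals ⁻¹' {(fun i => (r i : ℝ), fun j => (c j : ℝ))}

namespace transportationPolytope

variable {l u : ι → κ → ℤ} {r : ι → ℤ} {c : κ → ℤ} {X D : ι → κ → ℝ}

lemma mem_iff : X ∈ transportationPolytope l u r c ↔
    (∀ i j, X i j ∈ Set.Icc (l i j : ℝ) (u i j)) ∧ (∀ i, ∑ j, X i j = r i) ∧
      ∀ j, ∑ i, X i j = c j := by
  simp only [transportationPolytope, Set.mem_inter_iff, Set.mem_preimage, Set.mem_singleton_iff,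
    marginals_eq_iff, Set.mem_Icc, Pi.le_def, forall_and]

protected lemma convex : Convex ℝ (transportationPolytope l u r c) :=
  (convex_Icc _ _).inter ((convex_singleton _).linear_preimage marginals)

protected lemma isCompact : IsCompact (transportationPolytope l u r c) :=
  isCompact_Icc.inter_right <|
    isClosed_singleton.preimage (marginals (R := ℝ)).continuous_of_finiteDimensional

lemma eventually_add_smul_mem (hX : X ∈ transportationPolytope l u r c) (hD : marginals D = 0)
    (hsupp : ∀ i j, X i j ∈ realIntegers → D i j = 0) :
    ∀ᶠ t in 𝓝 (0 : ℝ), X + t • D ∈ transportationPolytope l u r c := by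
  have hentry : ∀ᶠ t in 𝓝 (0 : ℝ), ∀ i j, X i j + t * D i j ∈ Set.Icc (l i j : ℝ) (u i j) :=
    Filter.eventually_all.2 fun i => Filter.eventually_all.2 fun j =>
      eventually_add_mul_mem_Icc ((mem_iff.1 hX).1 i j) (hsupp i j)
  filter_upwards [hentry] with t ht
  refine ⟨⟨fun i j => (ht i j).1, fun i j => (ht i j).2⟩, ?_⟩
  rw [Set.mem_preimage, map_add, map_smul, hD, smul_zero, add_zero]
  exact hX.2

lemma exists_ne_zero_marginals_eq_zero_of_notMem (hX : X ∈ transportationPolytope l u r c)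
    (hint : ∃ i j, X i j ∉ realIntegers) :
    ∃ D : ι → κ → ℝ, D ≠ 0 ∧ (∀ i j, X i j ∈ realIntegers → D i j = 0) ∧ marginals D = 0 := by
  classical
  obtain ⟨-, hrow, hcol⟩ := mem_iff.1 hX
  obtain ⟨i₀, j₀, h₀⟩ := hint
  obtain ⟨D, hD, hsupp, hmarg⟩ := exists_ne_zero_marginals_eq_zero (K := ℝ)
    (S := {p : ι × κ | X p.1 p.2 ∉ realIntegers}) ⟨(i₀, j₀), by simpa using h₀⟩
    (by
      rintro ⟨i, j⟩ hij
      obtain ⟨k, hk, hik⟩ := exists_ne_notMem_of_sum_mem (H := realIntegers)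
        ⟨r i, (hrow i).symm⟩ (mem_filter.1 hij).2
      exact ⟨(i, k), mem_filter.2 ⟨mem_univ _, hik⟩, rfl, by simpa using hk⟩)
    (by
      rintro ⟨i, j⟩ hij
      obtain ⟨k, hk, hkj⟩ := exists_ne_notMem_of_sum_mem (H := realIntegers)
        (x := fun k => X k j) ⟨c j, (hcol j).symm⟩ (mem_filter.1 hij).2
      exact ⟨(k, j), mem_filter.2 ⟨mem_univ _, hkj⟩, rfl, by simpa using hk⟩)
  exact ⟨D, hD, fun i j h => hsupp i j fun hij => (mem_filter.1 hij).2 h, hmarg⟩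

theorem mem_realIntegers_of_mem_extremePoints
    (hX : X ∈ (transportationPolytope l u r c).extremePoints ℝ) (i : ι) (j : κ) :
    X i j ∈ realIntegers := by
  by_contra hij
  obtain ⟨D, hD, hsupp, hmarg⟩ := exists_ne_zero_marginals_eq_zero_of_notMem hX.1 ⟨i, j, hij⟩
  have hadd := eventually_add_smul_mem hX.1 hmarg hsupp
  have hsub := eventually_add_smul_mem hX.1 (D := -D) (by rw [map_neg, hmarg, neg_zero])
    fun i j h => neg_eq_zero.2 (hsupp i j h)
  obtain ⟨t, ⟨htadd, htsub⟩, ht⟩ :=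
    (((hadd.and hsub).filter_mono nhdsWithin_le_nhds).and
      (self_mem_nhdsWithin (s := {(0 : ℝ)}ᶜ))).exists
  rw [smul_neg, ← sub_eq_add_neg] at htsub
  exact smul_ne_zero ht hD
    (eq_zero_of_mem_extremePoints_of_add_mem_of_sub_mem hX htadd htsub)

lemma finite_extremePoints : ((transportationPolytope l u r c).extremePoints ℝ).Finite := by
  classical
  refine ((Set.finite_Icc l u).image fun Z i j => (Z i j : ℝ)).subset fun X hX => ?_
  choose Z hZ using mem_realIntegers_of_mem_extremePoints hX
  replace hZ : ∀ i j, (Z i j : ℝ) = X i j := hZ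
  have hbox := (mem_iff.1 hX.1).1
  simp only [← hZ, Set.mem_Icc, Int.cast_le] at hbox
  exact ⟨Z, ⟨fun i j => (hbox i j).1, fun i j => (hbox i j).2⟩, funext₂ hZ⟩

theorem convexHull_extremePoints :
    convexHull ℝ ((transportationPolytope l u r c).extremePoints ℝ) =
      transportationPolytope l u r c := by
  rw [← (finite_extremePoints.isClosed_convexHull ℝ).closure_eq]
  exact closure_convexHull_extremePoints transportationPolytope.isCompact
    transportationPolytope.convex

end transportationPolytope

end IntegralVertices

section ControlledRounding

variable {ι κ : Type*} [Fintype ι] [Fintype κ]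

/-- The integer `z` is `x` rounded up or down. -/
def IsRounding (z : ℤ) (x : ℝ) : Prop := z = ⌊x⌋ ∨ z = ⌈x⌉

lemma isRounding_iff {z : ℤ} {x : ℝ} : IsRounding z x ↔ ⌊x⌋ ≤ z ∧ z ≤ ⌈x⌉ := by
  have := Int.floor_le_ceil x
  have := Int.ceil_le_floor_add_one x
  rw [IsRounding]
  omega

lemma isRounding_neg {z : ℤ} {x : ℝ} : IsRounding (-z) (-x) ↔ IsRounding z x := by
  simp only [isRounding_iff, Int.floor_neg, Int.ceil_neg, neg_le_neg_iff, and_comm]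

lemma IsRounding.cast_eq {z : ℤ} {x : ℝ} (h : IsRounding z x) (hx : ∃ w : ℤ, x = w) :
    (z : ℝ) = x := by
  obtain ⟨w, rfl⟩ := hx
  simpa [IsRounding] using h

/-- The integer matrix `Z` is a controlled rounding of `A`: its entries, row sums and column sums
are those of `A` rounded up or down. -/
structure IsControlledRounding (A : ι → κ → ℝ) (Z : ι → κ → ℤ) : Prop where
  entry : ∀ i j, IsRounding (Z i j) (A i j)
  row : ∀ i, IsRounding (∑ j, Z i j) (∑ j, A i j)
  col : ∀ j, IsRounding (∑ i, Z i j) (∑ i, A i j)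

/-- `A` with an extra row and an extra column, both indexed by `none`, that make all row and column
sums vanish. -/
def bordered (A : ι → κ → ℝ) : Option ι → Option κ → ℝ
  | some i, some j => A i j
  | some i, none => -∑ j, A i j
  | none, some j => -∑ i, A i j
  | none, none => ∑ i, ∑ j, A i j

lemma bordered_mem_transportationPolytope (A : ι → κ → ℝ) :
    bordered A ∈ transportationPolytope (fun i j => ⌊bordered A i j⌋) (fun i j => ⌈bordered A i j⌉)
      0 0 := by
  refine transportationPolytope.mem_iff.2
    ⟨fun i j => ⟨Int.floor_le _, Int.le_ceil _⟩, fun i => ?_, fun j => ?_⟩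
  · cases i with
    | none => simp [Fintype.sum_option, bordered, sum_comm (f := A)]
    | some i => simp [Fintype.sum_option, bordered]
  · cases j <;> simp [Fintype.sum_option, bordered]

lemma isControlledRounding_of_bordered {A : ι → κ → ℝ} {Z : Option ι → Option κ → ℤ}
    (hZ : ∀ i j, IsRounding (Z i j) (bordered A i j)) (hrow : ∀ i, ∑ j, Z i j = 0)
    (hcol : ∀ j, ∑ i, Z i j = 0) : IsControlledRounding A fun i j => Z (some i) (some j) where
  entry i j := hZ (some i) (some j)
  row i := by
    have hsum := hrow (some i)
    rw [Fintype.sum_option, add_eq_zero_iff_eq_neg] at hsum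
    exact isRounding_neg.1 (hsum ▸ hZ (some i) none)
  col j := by
    have hsum := hcol (some j)
    rw [Fintype.sum_option, add_eq_zero_iff_eq_neg] at hsum
    exact isRounding_neg.1 (hsum ▸ hZ none (some j))

lemma exists_isControlledRounding_of_mem_extremePoints {A : ι → κ → ℝ}
    {X : Option ι → Option κ → ℝ}
    (hX : X ∈ (transportationPolytope (fun i j => ⌊bordered A i j⌋) (fun i j => ⌈bordered A i j⌉)
      0 0).extremePoints ℝ) :
    ∃ Z : ι → κ → ℤ, IsControlledRounding A Z ∧ ∀ i j, (Z i j : ℝ) = X (some i) (some j) := by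
  choose Z hZ using transportationPolytope.mem_realIntegers_of_mem_extremePoints hX
  replace hZ : ∀ i j, (Z i j : ℝ) = X i j := hZ
  obtain ⟨hentry, hrow, hcol⟩ := transportationPolytope.mem_iff.1 hX.1
  simp only [← hZ, Set.mem_Icc, Int.cast_le, Pi.zero_apply] at hentry hrow hcol
  norm_cast at hrow hcol
  exact ⟨_, isControlledRounding_of_bordered (fun i j => isRounding_iff.2 (hentry i j)) hrow hcol,
    fun i j => hZ (some i) (some j)⟩

theorem unbiased_controlled_rounding_general (A : ι → κ → ℝ) :
    ∃ (N : ℕ) (p : Fin N → ℝ) (Z : Fin N → ι → κ → ℤ),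
      (∀ k, 0 ≤ p k) ∧ ∑ k, p k = 1 ∧ (∀ k, IsControlledRounding A (Z k)) ∧
        ∀ i j, ∑ k, p k * (Z k i j : ℝ) = A i j := by
  have hmem := bordered_mem_transportationPolytope A
  rw [← transportationPolytope.convexHull_extremePoints, mem_convexHull_iff_exists_fintype] at hmem
  obtain ⟨α, _, w, X, hw, hw_sum, hX, hmean⟩ := hmem
  choose Z hZ hZX using fun a => exists_isControlledRounding_of_mem_extremePoints (hX a)
  let e := (Fintype.equivFin α).symm
  refine ⟨Fintype.card α, w ∘ e, Z ∘ e, fun k => hw (e k), (e.sum_comp w).trans hw_sum,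
    fun k => hZ (e k), fun i j => ?_⟩
  calc
    ∑ k, w (e k) * (Z (e k) i j : ℝ) = ∑ a, w a * X a (some i) (some j) := by
      simp only [hZX, e.sum_comp fun a => w a * X a (some i) (some j)]
    _ = A i j := by simpa [bordered] using congrFun₂ hmean (some i) (some j)

end ControlledRounding

/-- Unbiased controlled rounding: for every nonnegative real
matrix with integer row sums there is a finitely supported random integer matrix
which almost surely rounds each entry up or down, almost surely preserves the
(integer) row sums, almost surely rounds each column sum up or down, and whose
expected entries equal the original entries. -/
theorem unbiased_controlled_rounding
    (m n : ℕ) (A : Fin m → Fin n → ℝ)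
    (hA : ∀ i j, 0 ≤ A i j)
    (hrow : ∀ i, ∃ z : ℤ, ∑ j, A i j = z) :
    ∃ (N : ℕ) (p : Fin N → ℝ) (Z : Fin N → Fin m → Fin n → ℤ),
      (∀ k, 0 ≤ p k) ∧ (∑ k, p k = 1) ∧
      (∀ k, p k ≠ 0 → ∀ i j, Z k i j = ⌊A i j⌋ ∨ Z k i j = ⌈A i j⌉) ∧
      (∀ k, p k ≠ 0 → ∀ i, ((∑ j, Z k i j : ℤ) : ℝ) = ∑ j, A i j) ∧
      (∀ k, p k ≠ 0 → ∀ j,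
        (∑ i, Z k i j) = ⌊∑ i, A i j⌋ ∨ (∑ i, Z k i j) = ⌈∑ i, A i j⌉) ∧
      (∀ i j, ∑ k, p k * ((Z k i j : ℤ) : ℝ) = A i j) := by
  obtain ⟨N, p, Z, hp, hsum, hZ, hmean⟩ := unbiased_controlled_rounding_general A
  exact ⟨N, p, Z, hp, hsum, fun k _ => (hZ k).entry, fun k _ i => ((hZ k).row i).cast_eq (hrow i),
    fun k _ => (hZ k).col, hmean⟩
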